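/- arXiv:1412.7363 — 2 statements merged into one kernel-verified Lean document; each statement's English description precedes it below -/
import Mathlib

section
/- Let b, c be positive integers with q = gcd(b,c), let p > 1 be an integer, and let χ₁, χ₂ be non-principal primitive Dirichlet characters of the same modulus k satisfying (−1)^{p+1}·χ₁(−1)·χ₂(−1) = 1. Then (p+1)·( b·c^p·s_p(b,c:χ₁,χ₂) + c·b^p·s_p(c,b: χ̄₂, χ̄₁) ) = Σ_{j=0}^{p+1} C(p+1,j)·b^j·c^{p+1−j}·B_{j,χ̄₁}·B_{p+1−j,χ₂} + p·q^{p+1}·k^{p−1}·Σ_{h=1}^{k−1} Σ_{a=1}^{k−1} χ₁(h)·χ̄₂(a)·B̄_{p+1}((c·a+b·h)/(q·k)). -/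
open Finset

/-- The `n`-th Bernoulli polynomial evaluated at a real number. -/
noncomputable def BPoly (n : ℕ) (x : ℝ) : ℝ :=
  Polynomial.eval x ((Polynomial.bernoulli n).map (algebraMap ℚ ℝ))

open scoped Classical in
/-- The `n`-th Bernoulli function `B̄ₙ`. -/
noncomputable def BFun (n : ℕ) (x : ℝ) : ℝ :=
  if n = 1 then (if ∃ m : ℤ, x = (m : ℝ) then 0 else x - ⌊x⌋ - 1/2)
  else BPoly n (Int.fract x)

/-- The generalized Bernoulli function `B̄_{m,χ}` attached to a Dirichlet character. -/
noncomputable def BFunChar {k : ℕ} (χ : DirichletCharacter ℂ k) (m : ℕ) (x : ℝ) : ℂ :=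
  (k : ℂ) ^ ((m : ℤ) - 1) *
    ∑ n ∈ Finset.Icc 1 (k - 1), (starRingEnd ℂ) (χ (n : ZMod k)) * ((BFun m (((n : ℝ) + x) / k)) : ℂ)

/-- The generalized Bernoulli number `B_{m,χ} = B̄_{m,χ}(0)`. -/
noncomputable def BNumChar {k : ℕ} (χ : DirichletCharacter ℂ k) (m : ℕ) : ℂ := BFunChar χ m 0

/-- The complex conjugate of a Dirichlet character. -/
noncomputable def conjChar {k : ℕ} (χ : DirichletCharacter ℂ k) : DirichletCharacter ℂ k :=
  χ.ringHomComp (starRingEnd ℂ)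

/-- The character Dedekind sum `s_p(b,c : χ₁, χ₂)` for characters of the same modulus. -/
noncomputable def sChar {k : ℕ} (p b c : ℕ) (χ₁ χ₂ : DirichletCharacter ℂ k) : ℂ :=
  ∑ n ∈ Finset.range (c * k),
    χ₁ (n : ZMod k) * BFunChar χ₂ p (((b : ℝ) * n) / c) * ((BFun 1 ((n : ℝ) / (c * k))) : ℂ)

/-!
The generating function of the Bernoulli polynomials satisfies a first order differential equation,
which turns the product of the generating functions at `x` and `y` into an expression in the one at
`x + y`. Comparing coefficients gives Nörlund's convolution formula. When `x + y = 1 + t`, the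
polynomials on its right-hand side may be evaluated at `t` instead of `1 + t`, and so
`∑ⱼ C(p+1,j) B̄ⱼ(x) B̄_{p+1-j}(y) = (p+1) B̄ₚ(x+y) (B̄₁(x) + B̄₁(y)) - p B̄_{p+1}(x+y)` for all
non-integral `x` and `y`. Summed over the points `(x+m)/c` and `(y+l)/b` with `0 ≤ m < c` and
`0 ≤ l < b`, this becomes Carlitz's reciprocity law for Dedekind–Rademacher sums, by the
multiplication formula `c^(n-1) ∑ₘ B̄ₙ((x+m)/c) = B̄ₙ(x)`; the greatest common divisor enters
because `bm + cl` runs over multiples of it. Taking `x = h/k`, `y = a/k` and weighting by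
`χ₁(h) χ̄₂(a)` gives the reciprocity law for character Dedekind sums.
-/

section BernoulliPolynomials

open PowerSeries

variable {A : Type*} [CommRing A] [Algebra ℚ A]

lemma isRightRegular_exp_sub_one : IsRightRegular (exp A - 1) := by
  refine IsRightRegular.of_mul (a := bernoulliPowerSeries A) ?_
  rw [mul_comm, bernoulliPowerSeries_mul_exp_sub_one]
  exact fun f g h => X_mul_cancel (by simpa only [mul_comm] using h)

lemma derivative_rescale_exp (t : A) :
    d⁄dX A (rescale t (exp A)) = C t * rescale t (exp A) := by
  ext n
  have h : algebraMap ℚ A (1 / (n + 1).factorial) * (n + 1) =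
      algebraMap ℚ A (1 / n.factorial) := by
    rw [← Nat.cast_add_one, ← map_natCast (algebraMap ℚ A), ← map_mul, Nat.factorial_succ]
    congr 1
    push_cast
    field_simp
  rw [coeff_derivative, coeff_C_mul, coeff_rescale, coeff_rescale, coeff_exp, coeff_exp, ← h]
  ring

/-- The exponential generating function `∑ Bₙ(t) Xⁿ / n!` of the Bernoulli polynomials at `t`. -/
noncomputable def bernoulliEGF (t : A) : A⟦X⟧ :=
  mk fun n => Polynomial.aeval t ((1 / n.factorial : ℚ) • Polynomial.bernoulli n)

lemma bernoulliEGF_mul_exp_sub_one (t : A) :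
    bernoulliEGF t * (exp A - 1) = X * rescale t (exp A) :=
  Polynomial.bernoulli_generating_function t

lemma factorial_mul_coeff_bernoulliEGF (n : ℕ) (t : A) :
    (n.factorial : A) * coeff n (bernoulliEGF t) = Polynomial.aeval t (Polynomial.bernoulli n) := by
  have h : (n.factorial : ℚ) ≠ 0 := by positivity
  rw [bernoulliEGF, coeff_mk, map_smul, Algebra.smul_def, ← map_natCast (algebraMap ℚ A),
    ← mul_assoc, ← map_mul, mul_one_div_cancel h, map_one, one_mul]

lemma bernoulliEGF_mul_bernoulliEGF (x y : A) :
    bernoulliEGF x * bernoulliEGF y =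
      C (x + y - 1) * (X * bernoulliEGF (x + y)) + bernoulliEGF (x + y)
        - X * d⁄dX A (bernoulliEGF (x + y)) := by
  have hx := bernoulliEGF_mul_exp_sub_one x
  have hy := bernoulliEGF_mul_exp_sub_one y
  have hxy := bernoulliEGF_mul_exp_sub_one (x + y)
  have hexp := exp_mul_exp_eq_exp_add (A := A) x y
  have hderiv := congrArg (d⁄dX A) hxy
  rw [Derivation.leibniz, Derivation.leibniz, derivative_rescale_exp, map_sub,
    derivative_exp] at hderiv
  simp only [smul_eq_mul, derivative_X, Derivation.map_one_eq_zero, sub_zero] at hderiv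
  have hC : C (x + y - 1) = C (x + y) - (1 : A⟦X⟧) := by simp
  apply isRightRegular_exp_sub_one
  apply isRightRegular_exp_sub_one
  simp only [hC]
  linear_combination (bernoulliEGF y * (exp A - 1)) * hx + X * rescale x (exp A) * hy
    + X ^ 2 * hexp - ((C (x + y) - 1) * X * (exp A - 1) + (exp A - 1)) * hxy
    + X * (exp A - 1) * hderiv - X * exp A * hxy

theorem sum_choose_mul_bernoulli_mul_bernoulli (n : ℕ) (x y : A) :
    ∑ j ∈ range (n + 2), ((n + 1).choose j : A) * Polynomial.aeval x (Polynomial.bernoulli j)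
        * Polynomial.aeval y (Polynomial.bernoulli (n + 1 - j)) =
      (n + 1) * (x + y - 1) * Polynomial.aeval (x + y) (Polynomial.bernoulli n)
        - n * Polynomial.aeval (x + y) (Polynomial.bernoulli (n + 1)) := by
  have h := congrArg (coeff (n + 1)) (bernoulliEGF_mul_bernoulliEGF x y)
  rw [map_sub, map_add, coeff_C_mul, coeff_succ_X_mul, coeff_succ_X_mul, coeff_derivative,
    coeff_mul, Finset.Nat.sum_antidiagonal_eq_sum_range_succ_mk] at h
  simp only [← factorial_mul_coeff_bernoulliEGF]
  calc
    _ = ((n + 1).factorial : A) * ∑ j ∈ range (n + 2),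
        coeff j (bernoulliEGF x) * coeff (n + 1 - j) (bernoulliEGF y) := by
      rw [mul_sum]
      refine sum_congr rfl fun j hj => ?_
      rw [← Nat.choose_mul_factorial_mul_factorial (mem_range_succ_iff.mp hj)]
      push_cast
      ring
    _ = _ := by
      rw [h, Nat.factorial_succ]
      push_cast
      ring

lemma bernoulliFun_one_add (n : ℕ) (x : ℝ) :
    bernoulliFun n (1 + x) = bernoulliFun n x + n * x ^ (n - 1) := by
  simpa [bernoulliFun, Polynomial.aeval_comp]
    using congrArg (Polynomial.aeval x) (Polynomial.bernoulli_comp_one_add_X n)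

lemma mul_bernoulliFun_one_add_sub (n : ℕ) (x : ℝ) :
    (n + 1) * x * bernoulliFun n (1 + x) - n * bernoulliFun (n + 1) (1 + x) =
      (n + 1) * x * bernoulliFun n x - n * bernoulliFun (n + 1) x := by
  rw [bernoulliFun_one_add, bernoulliFun_one_add]
  cases n with
  | zero => simp
  | succ n =>
    simp only [Nat.add_sub_cancel]
    push_cast
    ring

lemma sum_choose_mul_bernoulliFun (n : ℕ) (x y : ℝ) :
    ∑ j ∈ range (n + 2), ((n + 1).choose j : ℝ) * bernoulliFun j x * bernoulliFun (n + 1 - j) y =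
      (n + 1) * (x + y - 1) * bernoulliFun n (x + y) - n * bernoulliFun (n + 1) (x + y) := by
  simpa only [bernoulliFun, Polynomial.eval_map_algebraMap]
    using sum_choose_mul_bernoulli_mul_bernoulli n x y

end BernoulliPolynomials

section PeriodicSums

variable {M : Type*} [AddCommMonoid M]

lemma sum_range_mul_eq_sum_sum (c k : ℕ) (f : ℕ → M) :
    ∑ n ∈ range (c * k), f n = ∑ m ∈ range c, ∑ h ∈ range k, f (h + k * m) := by
  induction c with
  | zero => simp
  | succ c ih =>
    rw [Nat.succ_mul, sum_range_add, ih, sum_range_succ]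
    congr! 3 with h
    ring

lemma sum_range_mul_of_periodic {g : ℤ → M} {c : ℕ} (hg : Function.Periodic g c) (d : ℕ) :
    ∑ i ∈ range (d * c), g i = d • ∑ i ∈ range c, g i := by
  have shift (h m : ℕ) : g ((h + c * m : ℕ) : ℤ) = g h := by
    simpa [mul_comm] using hg.nat_mul m h
  simp only [sum_range_mul_eq_sum_sum, shift, sum_const, card_range]

lemma sum_range_comp_affine_of_periodic {g : ℤ → M} {c : ℕ} (hg : Function.Periodic g c) {u : ℤ}
    (hu : IsCoprime u c) (s : ℤ) :
    ∑ i ∈ range c, g (u * i + s) = ∑ i ∈ range c, g i := by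
  rcases eq_or_ne c 0 with rfl | hc
  · simp
  have : NeZero c := ⟨hc⟩
  have lift (i : ℤ) : g ((i : ZMod c).cast : ℤ) = g i := by
    rw [ZMod.coe_intCast, Int.emod_def, mul_comm]
    exact hg.sub_int_mul_eq _
  have sum_lift (f : ZMod c → M) : ∑ i ∈ range c, f (i : ZMod c) = ∑ z, f z :=
    sum_nbij' (fun i => (i : ZMod c)) ZMod.val (by simp) (by simp [ZMod.val_lt])
      (fun i hi => ZMod.val_cast_of_lt (mem_range.mp hi)) (by simp) (by simp)
  let e : Equiv.Perm (ZMod c) :=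
    (((ZMod.coe_int_isUnit_iff_isCoprime u c).mpr hu.symm).unit.mulLeft).trans
      (Equiv.addRight (s : ZMod c))
  calc
    _ = ∑ i ∈ range c, g ((e (i : ZMod c)).cast : ℤ) :=
      sum_congr rfl fun i _ => by rw [← lift]; simp [e]
    _ = ∑ z : ZMod c, g (z.cast : ℤ) := by
      rw [sum_lift fun z => g ((e z).cast : ℤ)]
      exact Equiv.sum_comp e fun z => g (z.cast : ℤ)
    _ = _ := by
      rw [← sum_lift]
      exact sum_congr rfl fun i _ => by simpa using lift i

end PeriodicSums

section BernoulliFunctions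

lemma BFun_eq_add_ite (n : ℕ) (x : ℝ) :
    BFun n x = bernoulliFun n (Int.fract x) + if n = 1 ∧ Int.fract x = 0 then 1 / 2 else 0 := by
  have hint : (∃ m : ℤ, x = m) ↔ Int.fract x = 0 := by
    simp only [Int.fract_eq_zero_iff, Set.mem_range, eq_comm]
  by_cases hn : n = 1
  · subst hn
    by_cases hx : Int.fract x = 0 <;> simp [BFun, hint, hx, Int.self_sub_floor]
  · simp [BFun, hn, BPoly, bernoulliFun]

lemma BFun_of_fract_ne_zero (n : ℕ) {x : ℝ} (hx : Int.fract x ≠ 0) :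
    BFun n x = bernoulliFun n (Int.fract x) := by
  simp [BFun_eq_add_ite, hx]

lemma BFun_periodic (n : ℕ) : Function.Periodic (BFun n) 1 := fun x => by
  simp [BFun_eq_add_ite]

lemma BFun_add_div_periodic (n c : ℕ) (x : ℝ) :
    Function.Periodic (fun i : ℤ => BFun n ((x + i) / c)) c := fun i => by
  rcases eq_or_ne c 0 with rfl | hc
  · simp
  have h : (x + (i + c : ℤ)) / c = (x + i) / c + 1 := by
    push_cast
    field_simp
    ring
  simp only [h, BFun_periodic n _]

lemma sum_range_BFun_fract_add_div (n c : ℕ) (x : ℝ) :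
    ∑ i ∈ range c, BFun n ((Int.fract x + i) / c) = ∑ i ∈ range c, BFun n ((x + i) / c) := by
  have h := sum_range_comp_affine_of_periodic (BFun_add_div_periodic n c (Int.fract x))
    isCoprime_one_left ⌊x⌋
  push_cast at h
  rw [← h]
  refine sum_congr rfl fun i _ => ?_
  congr 2
  linear_combination Int.fract_add_floor x

lemma add_natCast_div_mem_Ico {c i : ℕ} (hi : i < c) {t : ℝ} (ht : t ∈ Set.Ico 0 1) :
    (t + i) / c ∈ Set.Ico (0 : ℝ) 1 := by
  have hic : (i : ℝ) + 1 ≤ c := mod_cast hi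
  have hc : (0 : ℝ) < c := by positivity [hi.pos]
  exact ⟨div_nonneg (by linarith [ht.1, i.cast_nonneg (α := ℝ)]) hc.le,
    (div_lt_one hc).mpr (by linarith [ht.2])⟩

theorem pow_mul_sum_BFun_add_div (n c : ℕ) (x : ℝ) :
    (c : ℝ) ^ n * ∑ i ∈ range c, BFun n ((x + i) / c) = c * BFun n x := by
  rcases eq_or_ne c 0 with rfl | hc
  · simp
  have hc' : (c : ℝ) ≠ 0 := mod_cast hc
  rw [← sum_range_BFun_fract_add_div, BFun_eq_add_ite n x]
  set t := Int.fract x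
  have ht : t ∈ Set.Ico (0 : ℝ) 1 := ⟨Int.fract_nonneg x, Int.fract_lt_one x⟩
  have hfract (i : ℕ) (hi : i ∈ range c) : Int.fract ((t + i) / c) = (t + i) / c :=
    Int.fract_eq_self.mpr (add_natCast_div_mem_Ico (mem_range.mp hi) ht)
  have hzero (i : ℕ) : (t + i) / c = 0 ↔ t = 0 ∧ i = 0 := by
    rw [div_eq_zero_iff, or_iff_left hc', add_eq_zero_iff_of_nonneg ht.1 i.cast_nonneg,
      Nat.cast_eq_zero]
  have hraabe : (c : ℝ) ^ n * ∑ i ∈ range c, bernoulliFun n ((t + i) / c)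
      = c * bernoulliFun n t := by
    have h := bernoulliFun_mul n hc (t / c)
    rw [mul_div_cancel₀ _ hc'] at h
    rw [h]
    simp only [add_div]
    field_simp
  have hcorr : (c : ℝ) ^ n * ∑ i ∈ range c, (if n = 1 ∧ (t + i) / c = 0 then 1 / 2 else 0 : ℝ)
      = c * if n = 1 ∧ t = 0 then 1 / 2 else 0 := by
    by_cases h : n = 1 ∧ t = 0
    · simp [h, hc, div_eq_zero_iff]
    · simp [hzero, ← and_assoc, h]
  rw [mul_add, ← hraabe, ← hcorr, ← mul_add, ← sum_add_distrib]
  congr 1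
  exact sum_congr rfl fun i hi => by rw [BFun_eq_add_ite, hfract i hi]

lemma pow_mul_sum_BFun_add_add_div (n : ℕ) {c : ℕ} (hc : c ≠ 0) (w x : ℝ) :
    (c : ℝ) ^ n * ∑ i ∈ range c, BFun n (w + (x + i) / c) = c * BFun n (c * w + x) := by
  rw [← pow_mul_sum_BFun_add_div]
  congr! 3 with i
  field_simp
  ring

lemma pow_mul_sum_BFun_add_mul_div {b c : ℕ} (hbc : c.Coprime b) (n : ℕ) (x : ℝ) :
    (b : ℝ) ^ n * ∑ i ∈ range b, BFun n ((x + c * i) / b) = b * BFun n x := by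
  rw [← pow_mul_sum_BFun_add_div]
  congr 1
  simpa using sum_range_comp_affine_of_periodic (BFun_add_div_periodic n b x)
    (Nat.isCoprime_iff_coprime.mpr hbc) 0

lemma pow_mul_sum_BFun_add_mul_div_gcd {b : ℕ} (hb : b ≠ 0) (c n : ℕ) (x : ℝ) :
    (b : ℝ) ^ n * ∑ i ∈ range b, BFun n ((x + c * i) / b)
      = b * b.gcd c ^ n * BFun n (x / b.gcd c) := by
  obtain ⟨b', c', hcop, hb', hc'⟩ := Nat.exists_coprime b c
  set q := b.gcd c
  have hq : (q : ℝ) ≠ 0 := mod_cast Nat.gcd_ne_zero_left hb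
  have hper : Function.Periodic (fun i : ℤ => BFun n ((x / q + (c' * i : ℤ)) / b')) b' := by
    intro i
    simpa [add_mul, mul_comm] using
      (BFun_add_div_periodic n b' (x / q)).int_mul c' (c' * i)
  have hcancel (i : ℕ) : (x + c * i) / b = (x / q + c' * i) / b' := by
    rw [hb', hc', Nat.cast_mul, Nat.cast_mul]
    field_simp
  have hfold : ∑ i ∈ range b, BFun n ((x + c * i) / b)
      = q * ∑ i ∈ range b', BFun n ((x / q + c' * i) / b') := by
    simp only [hcancel]
    have h := sum_range_mul_of_periodic hper q
    rw [mul_comm q, ← hb'] at h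
    simpa using h
  have hcoprime := pow_mul_sum_BFun_add_mul_div hcop.symm n (x / q)
  rw [hfold, hb']
  push_cast
  linear_combination (q : ℝ) * q ^ n * hcoprime

lemma fract_add_fract_eq_or (x y : ℝ) :
    Int.fract x + Int.fract y = Int.fract (x + y) ∨
      Int.fract x + Int.fract y = 1 + Int.fract (x + y) := by
  obtain ⟨z, hz⟩ := Int.fract_add x y
  have hz_lt : (z : ℝ) < 1 := by
    linarith [Int.fract_nonneg x, Int.fract_nonneg y, Int.fract_lt_one (x + y)]
  have lt_hz : (-2 : ℝ) < z := by
    linarith [Int.fract_lt_one x, Int.fract_lt_one y, Int.fract_nonneg (x + y)]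
  have : z < 1 := mod_cast hz_lt
  have : -2 < z := mod_cast lt_hz
  obtain rfl | rfl : z = 0 ∨ z = -1 := by lia
  · exact .inl (by push_cast at hz; linarith)
  · exact .inr (by push_cast at hz; linarith)

theorem sum_choose_mul_BFun_mul_BFun (p : ℕ) {x y : ℝ} (hx : Int.fract x ≠ 0)
    (hy : Int.fract y ≠ 0) :
    ∑ j ∈ range (p + 2), ((p + 1).choose j : ℝ) * BFun j x * BFun (p + 1 - j) y =
      (p + 1) * BFun p (x + y) * (BFun 1 x + BFun 1 y) - p * BFun (p + 1) (x + y) := by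
  simp only [BFun_of_fract_ne_zero _ hx, BFun_of_fract_ne_zero _ hy, sum_choose_mul_bernoulliFun,
    bernoulliFun_one]
  have hsucc : p * BFun (p + 1) (x + y) = p * bernoulliFun (p + 1) (Int.fract (x + y)) := by
    cases p <;> simp [BFun_eq_add_ite]
  rw [hsucc]
  obtain hsum | hsum := fract_add_fract_eq_or x y
  · have hxy : Int.fract (x + y) ≠ 0 := by
      rw [← hsum]
      positivity [(Int.fract_nonneg x).lt_of_ne' hx, Int.fract_nonneg y]
    rw [BFun_of_fract_ne_zero p hxy, hsum]
    linear_combination -(p + 1) * bernoulliFun p (Int.fract (x + y)) * hsum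
  · have hmul : Int.fract (x + y) * BFun p (x + y)
        = Int.fract (x + y) * bernoulliFun p (Int.fract (x + y)) := by
      by_cases hxy : Int.fract (x + y) = 0 <;> simp [BFun_eq_add_ite, hxy]
    have hshift := mul_bernoulliFun_one_add_sub p (Int.fract (x + y))
    rw [hsum]
    linear_combination hshift - (p + 1) * hmul - (p + 1) * BFun p (x + y) * hsum

end BernoulliFunctions

section DedekindSums

/-- The Dedekind–Rademacher sum `s_p(b, c; x, y)`: the Dedekind sum of `b` and `c` of weight `p`,
shifted by real numbers `x` and `y`. -/
noncomputable def dedekindRademacherSum (p b c : ℕ) (x y : ℝ) : ℝ :=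
  ∑ m ∈ range c, BFun p (b * ((x + m) / c) + y) * BFun 1 ((x + m) / c)

lemma fract_add_natCast_div_ne_zero {c : ℕ} (hc : c ≠ 0) {x : ℝ} (hx : Int.fract x ≠ 0) (m : ℕ) :
    Int.fract ((x + m) / c) ≠ 0 := by
  simp only [ne_eq, Int.fract_eq_zero_iff, Set.mem_range, not_exists] at hx ⊢
  intro z hz
  apply hx (z * c - m)
  push_cast
  rw [hz]
  field_simp
  ring

lemma pow_mul_sum_sum_BFun_add_mul_BFun_one (p : ℕ) {b : ℕ} (hb : b ≠ 0) (c : ℕ) (x y : ℝ) :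
    (b : ℝ) ^ p * ∑ m ∈ range c, ∑ l ∈ range b,
        BFun p ((x + m) / c + (y + l) / b) * BFun 1 ((x + m) / c) =
      b * dedekindRademacherSum p b c x y := by
  rw [dedekindRademacherSum, mul_sum, mul_sum]
  refine sum_congr rfl fun m _ => ?_
  rw [← sum_mul, ← mul_assoc, pow_mul_sum_BFun_add_add_div p hb, mul_assoc]

lemma mul_pow_mul_sum_sum_BFun_add (n : ℕ) {b c : ℕ} (hb : b ≠ 0) (hc : c ≠ 0) (x y : ℝ) :
    (b * c : ℝ) ^ n * ∑ m ∈ range c, ∑ l ∈ range b, BFun n ((x + m) / c + (y + l) / b) =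
      b * c * b.gcd c ^ n * BFun n ((c * y + b * x) / b.gcd c) := by
  have hinner (m : ℕ) : (b : ℝ) ^ n * ∑ l ∈ range b, BFun n ((x + m) / c + (y + l) / b)
      = b * BFun n ((c * y + b * x + b * m) / c) := by
    rw [pow_mul_sum_BFun_add_add_div n hb]
    congr 2
    field_simp
    ring
  rw [mul_pow, mul_right_comm, mul_sum, sum_congr rfl fun m _ => hinner m, ← mul_sum, mul_assoc,
    mul_comm _ ((c : ℝ) ^ n), pow_mul_sum_BFun_add_mul_div_gcd hc, Nat.gcd_comm]
  ring

lemma mul_pow_mul_sum_sum_sum_choose_mul_BFun_mul_BFun (n b c : ℕ) (x y : ℝ) :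
    (b * c : ℝ) ^ n * ∑ m ∈ range c, ∑ l ∈ range b, ∑ j ∈ range (n + 1),
        (n.choose j : ℝ) * BFun j ((x + m) / c) * BFun (n - j) ((y + l) / b) =
      b * c * ∑ j ∈ range (n + 1),
        (n.choose j : ℝ) * b ^ j * c ^ (n - j) * (BFun j x * BFun (n - j) y) := by
  calc
    _ = (b * c : ℝ) ^ n * ∑ j ∈ range (n + 1), (n.choose j : ℝ) *
        ((∑ m ∈ range c, BFun j ((x + m) / c)) * ∑ l ∈ range b, BFun (n - j) ((y + l) / b)) := by
      simp only [sum_comm (t := range (n + 1)), mul_assoc, ← mul_sum, sum_mul_sum]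
    _ = _ := by
      rw [mul_sum, mul_sum]
      refine sum_congr rfl fun j hj => ?_
      have hx := pow_mul_sum_BFun_add_div j c x
      have hy := pow_mul_sum_BFun_add_div (n - j) b y
      have hn : n = j + (n - j) := by grind
      have hbc : (b * c : ℝ) ^ n = b ^ j * c ^ (n - j) * (c ^ j * b ^ (n - j)) := by
        conv_lhs => rw [hn]
        ring
      rw [hbc]
      linear_combination (n.choose j * b ^ j * c ^ (n - j) : ℝ) *
        ((b ^ (n - j) * ∑ l ∈ range b, BFun (n - j) ((y + l) / b)) * hx + c * BFun j x * hy)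

theorem dedekindRademacherSum_reciprocity (p : ℕ) {b c : ℕ} (hb : b ≠ 0) (hc : c ≠ 0) {x y : ℝ}
    (hx : Int.fract x ≠ 0) (hy : Int.fract y ≠ 0) :
    (p + 1) * (b * c ^ p * dedekindRademacherSum p b c x y
        + c * b ^ p * dedekindRademacherSum p c b y x) =
      ∑ j ∈ range (p + 2), ((p + 1).choose j : ℝ) * b ^ j * c ^ (p + 1 - j) *
          (BFun j x * BFun (p + 1 - j) y)
        + p * b.gcd c ^ (p + 1) * BFun (p + 1) ((c * y + b * x) / b.gcd c) := by
  have hleft := pow_mul_sum_sum_BFun_add_mul_BFun_one p hb c x y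
  have hright := pow_mul_sum_sum_BFun_add_mul_BFun_one p hc b y x
  simp only [sum_comm (s := range b), add_comm (_ / (b : ℝ))] at hright
  have hsum := mul_pow_mul_sum_sum_BFun_add (p + 1) hb hc x y
  have hprod := mul_pow_mul_sum_sum_sum_choose_mul_BFun_mul_BFun (p + 1) b c x y
  have hpoint (m l : ℕ) := sum_choose_mul_BFun_mul_BFun p (fract_add_natCast_div_ne_zero hc hx m)
    (fract_add_natCast_div_ne_zero hb hy l)
  simp only [hpoint] at hprod
  simp only [sum_sub_distrib, mul_add, sum_add_distrib, ← mul_sum, mul_assoc (p + 1 : ℝ)] at hprod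
  have hbc : (b * c : ℝ) ≠ 0 := by positivity
  apply mul_left_cancel₀ hbc
  linear_combination hprod - (p + 1) * b * c ^ (p + 1) * hleft
    - (p + 1) * c * b ^ (p + 1) * hright + p * hsum

end DedekindSums

section TwistedSums

variable {k : ℕ}

/-- The character sum `∑ₕ ∑ₐ χ₁(h) χ̄₂(a) F(h/k, a/k)` over `1 ≤ h, a < k`, as a linear function of
the kernel `F`. -/
noncomputable def twistedSum (χ₁ χ₂ : DirichletCharacter ℂ k) : (ℝ → ℝ → ℝ) →ₗ[ℝ] ℂ where
  toFun F := ∑ h ∈ Icc 1 (k - 1), ∑ a ∈ Icc 1 (k - 1),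
    χ₁ (h : ZMod k) * (starRingEnd ℂ) (χ₂ (a : ZMod k)) * (F (h / k) (a / k) : ℂ)
  map_add' F G := by simp only [Pi.add_apply, Complex.ofReal_add, mul_add, sum_add_distrib]
  map_smul' r F := by
    simp only [Pi.smul_apply, smul_eq_mul, Complex.ofReal_mul, RingHom.id_apply, Complex.real_smul,
      mul_sum, mul_left_comm]

lemma twistedSum_apply (χ₁ χ₂ : DirichletCharacter ℂ k) (F : ℝ → ℝ → ℝ) :
    twistedSum χ₁ χ₂ F = ∑ h ∈ Icc 1 (k - 1), ∑ a ∈ Icc 1 (k - 1),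
      χ₁ (h : ZMod k) * (starRingEnd ℂ) (χ₂ (a : ZMod k)) * (F (h / k) (a / k) : ℂ) :=
  rfl

lemma fract_natCast_div_ne_zero {h : ℕ} (hh : h ∈ Icc 1 (k - 1)) :
    Int.fract ((h : ℝ) / k) ≠ 0 := by
  obtain ⟨hpos, hlt⟩ : 0 < h ∧ h < k := by grind
  have hk : (0 : ℝ) < k := mod_cast hpos.trans hlt
  rw [Int.fract_eq_self.mpr ⟨by positivity, (div_lt_one hk).mpr (mod_cast hlt)⟩]
  positivity

lemma twistedSum_congr (χ₁ χ₂ : DirichletCharacter ℂ k) {F G : ℝ → ℝ → ℝ}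
    (hFG : ∀ x y, Int.fract x ≠ 0 → Int.fract y ≠ 0 → F x y = G x y) :
    twistedSum χ₁ χ₂ F = twistedSum χ₁ χ₂ G := by
  simp only [twistedSum_apply]
  exact sum_congr rfl fun h hh => sum_congr rfl fun a ha => by
    rw [hFG _ _ (fract_natCast_div_ne_zero hh) (fract_natCast_div_ne_zero ha)]

lemma twistedSum_conjChar_swap (χ₁ χ₂ : DirichletCharacter ℂ k) (F : ℝ → ℝ → ℝ) :
    twistedSum (conjChar χ₂) (conjChar χ₁) F = twistedSum χ₁ χ₂ fun x y => F y x := by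
  simp only [twistedSum_apply]
  rw [sum_comm]
  simp [conjChar, mul_comm]

lemma BNumChar_conjChar_mul_BNumChar {p : ℕ} (hp : 0 < p) (hk : k ≠ 0)
    (χ₁ χ₂ : DirichletCharacter ℂ k) {i j : ℕ} (hij : i + j = p + 1) :
    BNumChar (conjChar χ₁) i * BNumChar χ₂ j =
      (k : ℂ) ^ (p - 1) * twistedSum χ₁ χ₂ fun x y => BFun i x * BFun j y := by
  have hpow : (k : ℂ) ^ ((i : ℤ) - 1) * (k : ℂ) ^ ((j : ℤ) - 1) = (k : ℂ) ^ (p - 1) := by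
    rw [← zpow_add₀ (mod_cast hk), ← zpow_natCast]
    congr 1
    lia
  rw [BNumChar, BNumChar, BFunChar, BFunChar, mul_mul_mul_comm, hpow, sum_mul_sum,
    twistedSum_apply]
  simp [conjChar, mul_mul_mul_comm]

lemma sum_range_natCast_mul_eq_sum_Icc (hk : 1 < k) (χ : DirichletCharacter ℂ k) (f : ℕ → ℂ) :
    ∑ h ∈ range k, χ (h : ZMod k) * f h = ∑ h ∈ Icc 1 (k - 1), χ (h : ZMod k) * f h := by
  have : Fact (1 < k) := ⟨hk⟩
  refine (sum_subset (fun h => by grind) fun h hh hnot => ?_).symm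
  obtain rfl : h = 0 := by grind
  rw [Nat.cast_zero, MulChar.map_zero, zero_mul]

lemma sChar_eq_twistedSum {p : ℕ} (hp : 0 < p) (hk : 1 < k) (b : ℕ) {c : ℕ} (hc : c ≠ 0)
    (χ₁ χ₂ : DirichletCharacter ℂ k) :
    sChar p b c χ₁ χ₂ =
      (k : ℂ) ^ (p - 1) * twistedSum χ₁ χ₂ (dedekindRademacherSum p b c) := by
  have hk0 : (k : ℝ) ≠ 0 := by positivity
  have hdiv (h m : ℕ) : ((h + k * m : ℕ) : ℝ) / (c * k) = (h / k + m) / c := by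
    push_cast
    field_simp
  have harg (h m a : ℕ) :
      (a + (b : ℝ) * (h + k * m : ℕ) / c) / k = b * ((h / k + m) / c) + a / k := by
    push_cast
    field_simp
    ring
  have hpow : (k : ℂ) ^ ((p : ℤ) - 1) = (k : ℂ) ^ (p - 1) := by
    rw [← zpow_natCast, Nat.cast_pred hp]
  calc
    _ = ∑ m ∈ range c, ∑ h ∈ range k, χ₁ (h : ZMod k) *
        ((k : ℂ) ^ (p - 1) * ∑ a ∈ Icc 1 (k - 1), (starRingEnd ℂ) (χ₂ (a : ZMod k)) *
          (BFun p (b * ((h / k + m) / c) + a / k) * BFun 1 ((h / k + m) / c) : ℝ)) := by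
      rw [sChar, sum_range_mul_eq_sum_sum]
      simp only [hdiv, BFunChar, harg, hpow]
      simp only [Nat.cast_add, Nat.cast_mul, ZMod.natCast_self, zero_mul, add_zero,
        Complex.ofReal_mul, mul_sum, sum_mul, mul_assoc]
    _ = _ := by
      simp only [sum_range_natCast_mul_eq_sum_Icc hk]
      simp only [twistedSum_apply, dedekindRademacherSum, Complex.ofReal_sum, mul_sum]
      rw [sum_comm]
      refine sum_congr rfl fun h _ => ?_
      rw [sum_comm]
      refine sum_congr rfl fun a _ => sum_congr rfl fun m _ => ?_
      ring

end TwistedSums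

lemma one_lt_level_of_ne_one {k : ℕ} [NeZero k] {χ : DirichletCharacter ℂ k} (hχ : χ ≠ 1) :
    1 < k :=
  Nat.one_lt_iff_ne_zero_and_ne_one.mpr
    ⟨NeZero.ne k, fun hk => hχ (DirichletCharacter.level_one' χ hk)⟩

theorem reciprocity_sChar_general {b c p k : ℕ} (hb : b ≠ 0) (hc : c ≠ 0) (hp : 0 < p) (hk : 1 < k)
    (χ₁ χ₂ : DirichletCharacter ℂ k) :
    ((p : ℂ) + 1) * ((b : ℂ) * (c : ℂ) ^ p * sChar p b c χ₁ χ₂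
        + (c : ℂ) * (b : ℂ) ^ p * sChar p c b (conjChar χ₂) (conjChar χ₁)) =
      (∑ j ∈ range (p + 2), (Nat.choose (p + 1) j : ℂ) * (b : ℂ) ^ j *
          (c : ℂ) ^ (p + 1 - j) * BNumChar (conjChar χ₁) j * BNumChar χ₂ (p + 1 - j))
      + (p : ℂ) * (b.gcd c : ℂ) ^ (p + 1) * (k : ℂ) ^ (p - 1) *
          ∑ h ∈ Icc 1 (k - 1), ∑ a ∈ Icc 1 (k - 1),
            χ₁ (h : ZMod k) * (starRingEnd ℂ) (χ₂ (a : ZMod k)) *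
              ((BFun (p + 1) (((c : ℝ) * a + (b : ℝ) * h) / (b.gcd c * k))) : ℂ) := by
  let T := twistedSum χ₁ χ₂
  have hT : T (((p : ℝ) + 1) • (((b : ℝ) * c ^ p) • dedekindRademacherSum p b c
        + ((c : ℝ) * b ^ p) • fun x y => dedekindRademacherSum p c b y x)) =
      T (∑ j ∈ range (p + 2), (((p + 1).choose j : ℝ) * b ^ j * c ^ (p + 1 - j)) •
            (fun x y => BFun j x * BFun (p + 1 - j) y)
        + ((p : ℝ) * b.gcd c ^ (p + 1)) •
            fun x y => BFun (p + 1) ((c * y + b * x) / b.gcd c)) :=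
    twistedSum_congr χ₁ χ₂ fun x y hx hy => by
      simpa [Finset.sum_apply] using dedekindRademacherSum_reciprocity p hb hc hx hy
  have hBNum (j : ℕ) (hj : j ∈ range (p + 2)) := BNumChar_conjChar_mul_BNumChar hp hk.ne_bot χ₁ χ₂
    (Nat.add_sub_of_le (mem_range_succ_iff.mp hj))
  have harg (h a : ℕ) : ((c : ℝ) * a + b * h) / (b.gcd c * k) =
      (c * (a / k) + b * (h / k)) / b.gcd c := by
    rw [mul_comm (b.gcd c : ℝ), ← div_div, add_div, mul_div_assoc, mul_div_assoc]
  simp only [map_add, map_smul, map_sum, Complex.real_smul] at hT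
  push_cast at hT
  rw [sChar_eq_twistedSum hp hk b hc, sChar_eq_twistedSum hp hk c hb, twistedSum_conjChar_swap]
  simp only [harg, ← twistedSum_apply χ₁ χ₂ fun x y => BFun (p + 1) ((c * y + b * x) / b.gcd c),
    mul_assoc _ (BNumChar _ _)]
  rw [sum_congr rfl fun j hj => by rw [hBNum j hj]]
  simp only [mul_left_comm _ ((k : ℂ) ^ (p - 1)), ← mul_sum]
  linear_combination (k : ℂ) ^ (p - 1) * hT

/-- Reciprocity formula for character Dedekind sums attached to two primitive
characters of the same modulus (Theorem 1.1). -/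
theorem reciprocity_sChar (b c : ℕ) (hb : 0 < b) (hc : 0 < c) (q : ℕ) (hq : q = Nat.gcd b c)
    (p : ℕ) (hp : 1 < p) (k : ℕ) [NeZero k] (χ₁ χ₂ : DirichletCharacter ℂ k)
    (h₁ : χ₁ ≠ 1) (h₂ : χ₂ ≠ 1) (hprim₁ : χ₁.IsPrimitive) (hprim₂ : χ₂.IsPrimitive)
    (hpar : (-1 : ℂ) ^ (p + 1) * χ₁ (-1) * χ₂ (-1) = 1) :
    ((p : ℂ) + 1) * ((b : ℂ) * (c : ℂ) ^ p * sChar p b c χ₁ χ₂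
        + (c : ℂ) * (b : ℂ) ^ p * sChar p c b (conjChar χ₂) (conjChar χ₁)) =
      (∑ j ∈ Finset.range (p + 2), (Nat.choose (p + 1) j : ℂ) * (b : ℂ) ^ j *
          (c : ℂ) ^ (p + 1 - j) * BNumChar (conjChar χ₁) j * BNumChar χ₂ (p + 1 - j))
      + (p : ℂ) * (q : ℂ) ^ (p + 1) * (k : ℂ) ^ (p - 1) *
          ∑ h ∈ Finset.Icc 1 (k - 1), ∑ a ∈ Finset.Icc 1 (k - 1),
            χ₁ (h : ZMod k) * (starRingEnd ℂ) (χ₂ (a : ZMod k)) *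
              ((BFun (p + 1) (((c : ℝ) * a + (b : ℝ) * h) / (q * k))) : ℂ) := by
  subst hq
  exact reciprocity_sChar_general hb.ne' hc.ne' (zero_lt_one.trans hp)
    (one_lt_level_of_ne_one h₁) χ₁ χ₂
end

section
/- Let χ₁ and χ₂ be distinct non-principal primitive Dirichlet characters of the same modulus k, let b, c be coprime positive integers, and let p ≥ 1 be an integer. Then Σ_{n=1}^{ck−1} χ₁(n)·B̄_{p,χ₂}(bn/c) = −ε · (p!/(2πi)^p) · (k/c)^{p−1} · G(b,χ₁) · G(c,χ̄₂) · L(p, χ̄₁χ₂), where ε = 1 + (−1)^p·χ₁(−1)·χ₂(−1), G(b,χ) = Σ_{n=0}^{k−1} χ(n)·e^{2πi·b·n/k} is the Gauss sum, and L(p, χ̄₁χ₂) is the Dirichlet L-function of the (non-principal) character χ̄₁χ₂ modulo k evaluated at p. -/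
open Finset

/-- The Gauss sum `G(b,χ) = Σ_{n=0}^{k−1} χ(n) e^{2πibn/k}`. -/
noncomputable def GaussSumE {k : ℕ} (b : ℕ) (χ : DirichletCharacter ℂ k) : ℂ :=
  ∑ n ∈ Finset.range k, χ (n : ZMod k) * Complex.exp (2 * Real.pi * Complex.I * b * n / k)

/-!
For every real `x` and every `p ≥ 1`,
`B̄_p(x) = -(p! / (2πi)^p) (∑ e(nx) n⁻ᵖ + (-1)^p ∑ e(-nx) n⁻ᵖ)`, the sums being read as values of
the periodic zeta function. For `p ≥ 2` this is the Fourier expansion of `B̄_p`; for `p = 1` the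
series no longer converges absolutely, and the value at `1` of the continuation is
`-log (1 - e(x))`, obtained by continuing the Mellin representation
`Γ(s) ∑ zⁿ n⁻ˢ = ∫ t^(s-1) z e⁻ᵗ / (1 - z e⁻ᵗ) dt` from `Re s > 1` to `s = 1`.

At rational points, the periodic zeta function is the L-function of an additive character.
Expanding `B̄_{p,χ₂}(bm/c)` therefore turns the sum into the L-function of the finite Fourier
transform `S(l) = ∑_{m < ck} ∑_{n < k} χ₁(m) χ̄₂(n) e((bm + cn)l / ck)`. It factors; since `χ₁` has
period `k`, the sum over `m` vanishes unless `c ∣ l`, and separability of the Gauss sums of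
primitive characters gives `S(cl) = c G(b,χ₁) G(c,χ̄₂) χ̄₁χ₂(l)`.
-/

section PolylogarithmAtOne

open HurwitzZeta Complex MeasureTheory Set Filter Topology Asymptotics

/-- The function `t ↦ z e⁻ᵗ / (1 - z e⁻ᵗ) = ∑_{n ≥ 1} zⁿ e⁻ⁿᵗ`, whose Mellin transform is
`Γ(s) ∑_{n ≥ 1} zⁿ / nˢ`. -/
noncomputable def polylogKernel (z : ℂ) (t : ℝ) : ℂ :=
  z * cexp (-t) / (1 - z * cexp (-t))

variable {z : ℂ}

lemma one_sub_mem_slitPlane (hz : ‖z‖ ≤ 1) (hz1 : z ≠ 1) : 1 - z ∈ slitPlane := by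
  refine mem_slitPlane_iff.2 (.inl ?_)
  rw [sub_re, one_re, sub_pos]
  refine lt_of_le_of_ne ((re_le_norm z).trans hz) fun hre => hz1 ?_
  have hnorm : |z.re| = ‖z‖ := le_antisymm (abs_re_le_norm z) (by rwa [hre, abs_one])
  exact Complex.ext hre (abs_re_eq_norm.1 hnorm)

lemma norm_mul_cexp_neg_lt_one (hz : ‖z‖ ≤ 1) {t : ℝ} (ht : 0 < t) : ‖z * cexp (-t)‖ < 1 := by
  rw [norm_mul, norm_exp, neg_re, ofReal_re]
  exact (mul_le_of_le_one_left (Real.exp_nonneg _) hz).trans_lt (by simpa using ht)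

lemma one_sub_mul_cexp_neg_mem_slitPlane (hz : ‖z‖ ≤ 1) (hz1 : z ≠ 1) {t : ℝ} (ht : 0 ≤ t) :
    1 - z * cexp (-t) ∈ slitPlane := by
  rcases ht.eq_or_lt with rfl | ht
  · simpa using one_sub_mem_slitPlane hz hz1
  · have hlt := norm_mul_cexp_neg_lt_one hz ht
    exact one_sub_mem_slitPlane hlt.le fun h => hlt.ne (by rw [h, norm_one])

lemma hasSum_polylogKernel (hz : ‖z‖ ≤ 1) {t : ℝ} (ht : 0 < t) :
    HasSum (fun n : ℕ => z ^ (n + 1) * Real.exp (-((n : ℝ) + 1) * t)) (polylogKernel z t) := by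
  convert! (hasSum_geometric_of_norm_lt_one (norm_mul_cexp_neg_lt_one hz ht)).mul_left
    (z * cexp (-t)) using 2 with n
  rw [← pow_succ', mul_pow, ← Complex.exp_nat_mul]
  push_cast
  ring_nf

lemma continuousOn_polylogKernel (hz : ‖z‖ ≤ 1) (hz1 : z ≠ 1) :
    ContinuousOn (polylogKernel z) (Ici 0) := by
  refine ContinuousOn.div (by fun_prop) (by fun_prop) fun t ht => ?_
  exact slitPlane_ne_zero (one_sub_mul_cexp_neg_mem_slitPlane hz hz1 ht)

lemma tendsto_cexp_neg_atTop : Tendsto (fun t : ℝ => cexp (-t)) atTop (𝓝 0) := by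
  simpa [Function.comp_def] using
    (continuous_ofReal.tendsto 0).comp Real.tendsto_exp_neg_atTop_nhds_zero

lemma polylogKernel_isBigO_exp_neg (z : ℂ) :
    polylogKernel z =O[atTop] fun t => Real.exp (-1 * t) := by
  have hbdd : Tendsto (fun t : ℝ => z / (1 - z * cexp (-t))) atTop (𝓝 (z / (1 - z * 0))) :=
    tendsto_const_nhds.div (tendsto_const_nhds.sub (tendsto_cexp_neg_atTop.const_mul z)) (by simp)
  have hexp : (fun t : ℝ => cexp (-t)) =O[atTop] fun t => Real.exp (-1 * t) :=
    .of_bound' (by simp [norm_exp])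
  refine ((hbdd.isBigO_one ℝ).mul hexp).congr (fun t => ?_) fun t => one_mul _
  rw [polylogKernel, div_mul_eq_mul_div]

lemma locallyIntegrableOn_polylogKernel (hz : ‖z‖ ≤ 1) (hz1 : z ≠ 1) :
    LocallyIntegrableOn (polylogKernel z) (Ici 0) :=
  (continuousOn_polylogKernel hz hz1).locallyIntegrableOn measurableSet_Ici

lemma differentiableAt_mellin_polylogKernel (hz : ‖z‖ ≤ 1) (hz1 : z ≠ 1) {s : ℂ} (hs : 0 < s.re) :
    DifferentiableAt ℂ (mellin (polylogKernel z)) s := by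
  have hzero : polylogKernel z =O[𝓝[>] 0] fun t : ℝ => t ^ (-(0 : ℝ)) := by
    have hlim :=
      ((continuousOn_polylogKernel hz hz1 0 self_mem_Ici).mono Ioi_subset_Ici_self).tendsto
    simpa using hlim.isBigO_one ℝ
  exact mellin_differentiableAt_of_isBigO_rpow_exp one_pos
    ((locallyIntegrableOn_polylogKernel hz hz1).mono_set Ioi_subset_Ici_self)
    (polylogKernel_isBigO_exp_neg z) hzero hs

lemma integrableOn_polylogKernel (hz : ‖z‖ ≤ 1) (hz1 : z ≠ 1) :
    IntegrableOn (polylogKernel z) (Ioi 0) :=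
  ((locallyIntegrableOn_polylogKernel hz hz1).integrableOn_of_isBigO_atTop
    (polylogKernel_isBigO_exp_neg z)
    ⟨Ioi 0, Ioi_mem_atTop 0, exp_neg_integrableOn_Ioi 0 one_pos⟩).mono_set Ioi_subset_Ici_self

lemma hasDerivAt_log_one_sub_mul_cexp_neg (hz : ‖z‖ ≤ 1) (hz1 : z ≠ 1) {t : ℝ} (ht : 0 ≤ t) :
    HasDerivAt (fun t : ℝ => log (1 - z * cexp (-t))) (polylogKernel z t) t := by
  have hexp : HasDerivAt (fun t : ℝ => cexp (-t)) (-cexp (-t)) t := by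
    simpa using (hasDerivAt_id t).ofReal_comp.neg.cexp
  convert ((hexp.const_mul z).const_sub 1).clog_real
    (one_sub_mul_cexp_neg_mem_slitPlane hz hz1 ht) using 1
  rw [polylogKernel, mul_neg, neg_neg]

lemma mellin_polylogKernel_one (hz : ‖z‖ ≤ 1) (hz1 : z ≠ 1) :
    mellin (polylogKernel z) 1 = -log (1 - z) := by
  have hlim : Tendsto (fun t : ℝ => log (1 - z * cexp (-t))) atTop (𝓝 0) := by
    have h : Tendsto (fun t : ℝ => 1 - z * cexp (-t)) atTop (𝓝 1) := by
      simpa using (tendsto_cexp_neg_atTop.const_mul z).const_sub 1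
    simpa using h.clog (by simp)
  have hintegral := integral_Ioi_of_hasDerivAt_of_tendsto'
    (fun t ht => hasDerivAt_log_one_sub_mul_cexp_neg hz hz1 ht)
    (integrableOn_polylogKernel hz hz1) hlim
  simpa [mellin] using hintegral

lemma cexp_two_pi_I_mul_ne_one {x : ℝ} (hx : (x : UnitAddCircle) ≠ 0) :
    cexp (2 * Real.pi * I * x) ≠ 1 := by
  rw [Ne, Complex.exp_eq_one_iff]
  rintro ⟨n, hn⟩
  refine hx ((AddCircle.coe_eq_zero_iff (1 : ℝ)).2 ⟨n, ?_⟩)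
  have hxn : (x : ℂ) = n := mul_left_cancel₀ two_pi_I_ne_zero (by rw [hn, mul_comm])
  simpa using (show (x : ℝ) = n by exact_mod_cast hxn).symm

lemma norm_cexp_two_pi_I_mul (x : ℝ) : ‖cexp (2 * Real.pi * I * x)‖ = 1 := by
  rw [show (2 * Real.pi * I * x : ℂ) = (2 * Real.pi * x : ℝ) * I by push_cast; ring,
    norm_exp_ofReal_mul_I]

lemma mellin_polylogKernel_eq_Gamma_mul_expZeta (x : ℝ) {s : ℂ} (hs : 1 < s.re) :
    mellin (polylogKernel (cexp (2 * Real.pi * I * x))) s = Gamma s * expZeta x s := by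
  set z := cexp (2 * Real.pi * I * x) with hz
  have hz_norm : ‖z‖ = 1 := norm_cexp_two_pi_I_mul x
  have hmellin := hasSum_mellin (a := fun n : ℕ => z ^ (n + 1)) (p := fun n => (n : ℝ) + 1)
    (F := polylogKernel z) (s := s) (fun n => .inr (by positivity)) (by linarith)
    (fun t ht => hasSum_polylogKernel hz_norm.le ht)
    (by simpa [hz_norm] using (summable_nat_add_iff 1).2 (Real.summable_one_div_nat_rpow.2 hs))
  have hzeta := (hasSum_nat_add_iff' 1).2 (hasSum_expZeta_of_one_lt_re x hs)
  simp only [Finset.range_one, Finset.sum_singleton, Nat.cast_zero,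
    zero_cpow (ne_zero_of_one_lt_re hs), div_zero, sub_zero] at hzeta
  refine hmellin.unique ?_
  convert! hzeta.mul_left (Gamma s) using 2 with n
  rw [hz, ← Complex.exp_nat_mul, mul_div_assoc]
  push_cast
  ring_nf

lemma expZeta_one {x : ℝ} (hx : (x : UnitAddCircle) ≠ 0) :
    expZeta x 1 = -log (1 - cexp (2 * Real.pi * I * x)) := by
  set z := cexp (2 * Real.pi * I * x)
  have hz_norm : ‖z‖ ≤ 1 := (norm_cexp_two_pi_I_mul x).le
  have hz1 : z ≠ 1 := cexp_two_pi_I_mul_ne_one hx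
  have hlim : Tendsto ((↑) : ℝ → ℂ) (𝓝[>] 1) (𝓝 1) :=
    (continuous_ofReal.tendsto' 1 1 ofReal_one).mono_left nhdsWithin_le_nhds
  have hmellin := (differentiableAt_mellin_polylogKernel hz_norm hz1 (s := 1)
    (by simp)).continuousAt.tendsto.comp hlim
  have hzeta := ((differentiableAt_Gamma_one.mul
    (differentiable_expZeta_of_ne_zero hx 1)).continuousAt.tendsto.comp hlim)
  have heq : mellin (polylogKernel z) 1 = Gamma 1 * expZeta x 1 := by
    refine tendsto_nhds_unique_of_eventuallyEq hmellin hzeta ?_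
    filter_upwards [self_mem_nhdsWithin] with s hs
    exact mellin_polylogKernel_eq_Gamma_mul_expZeta x (by simpa using hs)
  rw [← mellin_polylogKernel_one hz_norm hz1, heq, Gamma_one, one_mul]

lemma one_sub_cexp_two_pi_I_mul (x : ℝ) :
    1 - cexp (2 * Real.pi * I * x) = ((2 * Real.sin (Real.pi * x) : ℝ) : ℂ) *
      (cos (Real.pi * (x - 1 / 2) : ℝ) + sin (Real.pi * (x - 1 / 2) : ℝ) * I) := by
  have hangle : Real.pi * (x - 1 / 2) = Real.pi * x - Real.pi / 2 := by ring
  have hdouble : (2 * Real.pi * I * x : ℂ) = 2 * (Real.pi * x : ℝ) * I := by push_cast; ring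
  rw [hangle, hdouble, ← ofReal_cos, ← ofReal_sin, Real.cos_sub_pi_div_two,
    Real.sin_sub_pi_div_two, exp_mul_I, cos_two_mul', sin_two_mul]
  push_cast
  linear_combination -sin_sq_add_cos_sq (Real.pi * x)

lemma arg_one_sub_cexp_two_pi_I_mul {x : ℝ} (hx : x ∈ Ioo (0 : ℝ) 1) :
    arg (1 - cexp (2 * Real.pi * I * x)) = Real.pi * (x - 1 / 2) := by
  have hsin : 0 < Real.sin (Real.pi * x) :=
    Real.sin_pos_of_pos_of_lt_pi (mul_pos Real.pi_pos hx.1) (by nlinarith [Real.pi_pos, hx.2])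
  rw [one_sub_cexp_two_pi_I_mul, arg_mul_cos_add_sin_mul_I (by positivity)]
  constructor <;> nlinarith [Real.pi_pos, hx.1, hx.2]

lemma coe_ne_zero_of_mem_Ioo {x : ℝ} (hx : x ∈ Ioo (0 : ℝ) 1) : (x : UnitAddCircle) ≠ 0 := by
  rw [Ne, AddCircle.coe_eq_zero_iff_of_mem_Ico ⟨hx.1.le, by simpa using hx.2⟩]
  exact hx.1.ne'

lemma sinZeta_one {x : ℝ} (hx : x ∈ Ioo (0 : ℝ) 1) :
    sinZeta x 1 = Real.pi * (1 / 2 - x) := by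
  have hx0 := coe_ne_zero_of_mem_Ioo hx
  have hconj : 1 - cexp (2 * Real.pi * I * (-x : ℝ)) =
      (starRingEnd ℂ) (1 - cexp (2 * Real.pi * I * x)) := by
    simp [← exp_conj, conj_ofNat]
  have harg := arg_one_sub_cexp_two_pi_I_mul hx
  have hneg : expZeta (-x : UnitAddCircle) 1 = (starRingEnd ℂ) (expZeta x 1) := by
    rw [← AddCircle.coe_neg, expZeta_one (by simpa using hx0), expZeta_one hx0, hconj, log_conj,
      map_neg]
    rw [harg]
    nlinarith [Real.pi_pos, hx.2]
  rw [sinZeta_eq, hneg, sub_conj, expZeta_one hx0, neg_im, log_im, harg]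
  push_cast
  field_simp
  ring

end PolylogarithmAtOne

section BernoulliFunction

open HurwitzZeta Complex Set

lemma BFun_one_of_coe_eq_zero {x : ℝ} (hx : (x : UnitAddCircle) = 0) : BFun 1 x = 0 := by
  obtain ⟨m, rfl⟩ := (AddCircle.coe_eq_zero_iff (1 : ℝ)).1 hx
  simp [BFun]

lemma BFun_one_of_coe_ne_zero {x : ℝ} (hx : (x : UnitAddCircle) ≠ 0) :
    BFun 1 x = Int.fract x - 1 / 2 := by
  have hint : ¬∃ m : ℤ, x = m := by
    rintro ⟨m, rfl⟩
    exact hx ((AddCircle.coe_eq_zero_iff (1 : ℝ)).2 ⟨m, by simp⟩)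
  simp [BFun, hint, Int.self_sub_floor]

lemma BFun_eq_expZeta_of_two_le {p : ℕ} (hp : 2 ≤ p) (x : ℝ) :
    (BFun p x : ℂ) = -(p.factorial / (2 * Real.pi * I) ^ p) *
      (expZeta x p + (-1) ^ p * expZeta (-(x : UnitAddCircle)) p) := by
  have hre : 1 < (p : ℂ).re := by simpa using Nat.lt_of_succ_le hp
  have hfourier := hasSum_one_div_nat_pow_mul_fourier hp
    ⟨Int.fract_nonneg x, (Int.fract_lt_one x).le⟩
  have hzeta := (hasSum_expZeta_of_one_lt_re (Int.fract x) hre).add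
    ((hasSum_expZeta_of_one_lt_re (-Int.fract x) hre).mul_left ((-1) ^ p))
  have hsum : -(2 * Real.pi * I) ^ p / p.factorial * (BPoly p (Int.fract x) : ℂ) =
      expZeta x p + (-1) ^ p * expZeta (-(x : UnitAddCircle)) p := by
    rw [AddCircle.coe_neg, AddCircle.coe_fract] at hzeta
    refine hfourier.unique ?_
    convert! hzeta using 2 with n
    rw [fourier_coe_apply, fourier_coe_apply, cpow_natCast]
    push_cast
    ring_nf
  rw [← hsum, BFun, if_neg (by lia)]
  field_simp [two_pi_I_ne_zero, p.factorial_ne_zero]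

lemma BFun_one_eq_expZeta (x : ℝ) :
    (BFun 1 x : ℂ) = -(1 / (2 * Real.pi * I)) *
      (expZeta x 1 - expZeta (-(x : UnitAddCircle)) 1) := by
  by_cases hx : (x : UnitAddCircle) = 0
  · rw [BFun_one_of_coe_eq_zero hx, hx, neg_zero, sub_self, mul_zero, ofReal_zero]
  · have hfract : Int.fract x ∈ Ioo (0 : ℝ) 1 := by
      refine ⟨(Int.fract_nonneg x).lt_of_ne' fun h => hx ?_, Int.fract_lt_one x⟩
      rw [← AddCircle.coe_fract, h, AddCircle.coe_zero]
    have hsin := sinZeta_one hfract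
    rw [sinZeta_eq, AddCircle.coe_fract, div_eq_iff (by simp)] at hsin
    rw [BFun_one_of_coe_ne_zero hx, hsin]
    push_cast
    field_simp
    ring

lemma BFun_eq_expZeta {p : ℕ} (hp : 1 ≤ p) (x : ℝ) :
    (BFun p x : ℂ) = -(p.factorial / (2 * Real.pi * I) ^ p) *
      (expZeta x p + (-1) ^ p * expZeta (-(x : UnitAddCircle)) p) := by
  rcases hp.eq_or_lt with rfl | hp
  · simpa [sub_eq_add_neg] using BFun_one_eq_expZeta x
  · exact BFun_eq_expZeta_of_two_le hp x

end BernoulliFunction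

section LFunction

open HurwitzZeta ZMod

variable {N : ℕ} [NeZero N]

lemma LFunction_const_mul (a : ℂ) (Φ : ZMod N → ℂ) (s : ℂ) :
    ZMod.LFunction (fun l => a * Φ l) s = a * ZMod.LFunction Φ s := by
  simp only [ZMod.LFunction, mul_sum, mul_assoc, mul_left_comm a]

lemma LFunction_sum_mul {ι : Type*} (I : Finset ι) (w : ι → ℂ) (Φ : ι → ZMod N → ℂ) (s : ℂ) :
    ZMod.LFunction (fun l => ∑ i ∈ I, w i * Φ i l) s = ∑ i ∈ I, w i * ZMod.LFunction (Φ i) s := by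
  simp only [ZMod.LFunction, sum_mul, mul_sum]
  rw [sum_comm]
  exact sum_congr rfl fun i _ => sum_congr rfl fun l _ => by ring

lemma BFun_div_eq_LFunction {p : ℕ} (hp : 1 ≤ p) (a : ℤ) :
    (BFun p (a / N) : ℂ) = -(p.factorial / (2 * Real.pi * Complex.I) ^ p) *
      (ZMod.LFunction (fun l : ZMod N => stdAddChar (a * l : ZMod N)) p +
        (-1) ^ p * ZMod.LFunction (fun l : ZMod N => stdAddChar (a * -l : ZMod N)) p) := by
  by_cases hpole : (a : ZMod N) = 0 ∧ p = 1
  · obtain ⟨ha, rfl⟩ := hpole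
    have hx : ((a / N : ℝ) : UnitAddCircle) = 0 := by rw [← toAddCircle_intCast, ha, map_zero]
    simp [BFun_one_of_coe_eq_zero hx, ha]
  · have hs : (a : ZMod N) ≠ 0 ∨ (p : ℂ) ≠ 1 := by
      rwa [Nat.cast_ne_one, ← not_and_or]
    have hneg := LFunction_stdAddChar_eq_expZeta (-(a : ZMod N)) p (hs.imp_left neg_ne_zero.2)
    simp only [neg_mul, ← mul_neg] at hneg
    rw [BFun_eq_expZeta hp, ← toAddCircle_intCast, LFunction_stdAddChar_eq_expZeta _ _ hs, hneg,
      map_neg]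

lemma sum_mul_BFun_div_eq_LFunction {ι : Type*} {p : ℕ} (hp : 1 ≤ p) (I : Finset ι) (w : ι → ℂ)
    (u : ι → ℤ) {S : ZMod N → ℂ} (hS : ∀ l, S l = ∑ i ∈ I, w i * stdAddChar (u i * l : ZMod N)) :
    ∑ i ∈ I, w i * (BFun p (u i / N) : ℂ) =
      -(p.factorial / (2 * Real.pi * Complex.I) ^ p) *
        (ZMod.LFunction S p + (-1) ^ p * ZMod.LFunction (fun l => S (-l)) p) := by
  obtain rfl := funext hS
  simp only [LFunction_sum_mul, mul_sum, ← sum_add_distrib]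
  refine sum_congr rfl fun i _ => ?_
  rw [BFun_div_eq_LFunction hp]
  ring

lemma sum_range_natCast_zmod {M : Type*} [AddCommMonoid M] (f : ZMod N → M) :
    ∑ n ∈ range N, f n = ∑ x, f x :=
  sum_bij' (fun n _ => (n : ZMod N)) (fun x _ => x.val) (by simp)
    (fun x _ => mem_range.2 x.val_lt) (fun n hn => val_cast_of_lt (mem_range.1 hn)) (by simp)
    (by simp)

lemma sum_range_mul {M : Type*} [AddCommMonoid M] (c k : ℕ) (f : ℕ → M) :
    ∑ n ∈ range (c * k), f n = ∑ i ∈ range k, ∑ j ∈ range c, f (c * i + j) := by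
  induction k with
  | zero => simp
  | succ k ih => rw [Nat.mul_succ, sum_range_add, ih, sum_range_succ]

lemma toAddCircle_natCast_mul {c k : ℕ} [NeZero c] [NeZero k] (n : ℕ) :
    toAddCircle ((c * n : ℕ) : ZMod (c * k)) = toAddCircle (n : ZMod k) := by
  have hc : (c : ℝ) ≠ 0 := NeZero.ne _
  rw [toAddCircle_natCast, toAddCircle_natCast]
  push_cast
  rw [mul_div_mul_left _ _ hc]

lemma LFunction_of_support_dvd {c k : ℕ} [NeZero c] [NeZero k] {S : ZMod (c * k) → ℂ}
    {Ψ : ZMod k → ℂ} (hmul : ∀ l : ℤ, S (c * l) = Ψ l) (hzero : ∀ l : ℤ, ¬(c : ℤ) ∣ l → S l = 0)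
    (s : ℂ) : ZMod.LFunction S s = (c : ℂ) ^ (-s) * ZMod.LFunction Ψ s := by
  have hresidue (i : ℕ) : ∑ j ∈ range c, S (c * i + j : ℕ) *
      hurwitzZeta (toAddCircle ((c * i + j : ℕ) : ZMod (c * k))) s =
        Ψ i * hurwitzZeta (toAddCircle (i : ZMod k)) s := by
    rw [sum_eq_single_of_mem 0 (mem_range.2 (NeZero.pos c)), add_zero, toAddCircle_natCast_mul]
    · have hmul_i := hmul i
      push_cast at hmul_i ⊢
      rw [hmul_i]
    · intro j hj hj0
      have hdvd : ¬(c : ℤ) ∣ (c * i + j : ℕ) := by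
        rw [Int.natCast_dvd_natCast, ← Nat.dvd_add_iff_right (Dvd.intro _ rfl)]
        exact Nat.not_dvd_of_pos_of_lt (Nat.pos_of_ne_zero hj0) (mem_range.1 hj)
      have hzero_j := hzero _ hdvd
      rw [Int.cast_natCast] at hzero_j
      rw [hzero_j, zero_mul]
  rw [ZMod.LFunction, ZMod.LFunction, ← sum_range_natCast_zmod, sum_range_mul,
    ← sum_range_natCast_zmod, sum_congr rfl fun i _ => hresidue i, Nat.cast_mul,
    Complex.natCast_mul_natCast_cpow, mul_assoc]

end LFunction

section GaussSum

open ZMod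

variable {k : ℕ}

lemma conjChar_eq_inv (χ : DirichletCharacter ℂ k) : conjChar χ = χ⁻¹ := by
  rw [← MulChar.star_eq_inv]
  rfl

lemma inv_apply_neg_one (χ : DirichletCharacter ℂ k) : χ⁻¹ (-1) = χ (-1) := by
  simpa [MulChar.inv_apply] using congrArg χ (Ring.inverse_unit (-1 : (ZMod k)ˣ))

lemma isPrimitive_inv {χ : DirichletCharacter ℂ k} (hχ : χ.IsPrimitive) : χ⁻¹.IsPrimitive := by
  rwa [DirichletCharacter.isPrimitive_def, DirichletCharacter.conductor_inv]

variable [NeZero k]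

lemma sum_mul_stdAddChar_eq_inv_mul_GaussSumE {χ : DirichletCharacter ℂ k} (hχ : χ.IsPrimitive)
    (b : ℕ) (l : ZMod k) : ∑ x, χ x * stdAddChar (l * b * x : ZMod k) = χ⁻¹ l * GaussSumE b χ := by
  have hshift (a : ZMod k) : ∑ x, χ x * stdAddChar (a * x) = χ⁻¹ a * gaussSum χ stdAddChar :=
    gaussSum_mulShift_of_isPrimitive stdAddChar hχ a
  have hgauss : GaussSumE b χ = ∑ x, χ x * stdAddChar (b * x : ZMod k) := by
    rw [← sum_range_natCast_zmod, GaussSumE]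
    refine sum_congr rfl fun n _ => ?_
    have hcoe := stdAddChar_coe (N := k) (b * n)
    push_cast at hcoe
    rw [hcoe]
    ring_nf
  rw [hgauss, hshift, hshift, map_mul, mul_assoc]

variable {c : ℕ} [NeZero c]

lemma stdAddChar_natCast_mul_left (a : ℤ) :
    stdAddChar (c * a : ZMod (c * k)) = stdAddChar (a : ZMod k) := by
  have h := stdAddChar_coe (N := c * k) (c * a)
  push_cast at h
  have hc : (c : ℂ) ≠ 0 := NeZero.ne _
  rw [h, stdAddChar_coe]
  congr 1
  field_simp

lemma stdAddChar_natCast_mul_right (a : ℤ) :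
    stdAddChar (k * a : ZMod (c * k)) = stdAddChar (a : ZMod c) := by
  have h := stdAddChar_coe (N := c * k) (k * a)
  push_cast at h
  have hk : (k : ℂ) ≠ 0 := NeZero.ne _
  rw [h, stdAddChar_coe]
  congr 1
  field_simp

lemma sum_range_mul_stdAddChar_eq_mul (f : ZMod k → ℂ) (a : ℤ) :
    ∑ m ∈ range (c * k), f m * stdAddChar (a * m : ZMod (c * k)) =
      (∑ x : ZMod c, stdAddChar (x * a : ZMod c)) *
        ∑ r ∈ range k, f r * stdAddChar (a * r : ZMod (c * k)) := by
  rw [congrArg range (mul_comm c k), sum_range_mul, ← sum_range_natCast_zmod, sum_mul_sum]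
  refine sum_congr rfl fun i _ => sum_congr rfl fun r _ => ?_
  have hper : ((k * i + r : ℕ) : ZMod k) = r := by simp
  have hsplit : (a * (k * i + r : ℕ) : ZMod (c * k)) = k * (i * a : ℤ) + a * r := by
    push_cast
    ring
  rw [hper, hsplit, AddChar.map_add_eq_mul, stdAddChar_natCast_mul_right]
  push_cast
  ring

lemma sum_range_mul_stdAddChar_mul (f : ZMod k → ℂ) (a : ℤ) :
    ∑ m ∈ range (c * k), f m * stdAddChar (c * a * m : ZMod (c * k)) =
      c * ∑ x, f x * stdAddChar (a * x : ZMod k) := by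
  have hinner (r : ℕ) : stdAddChar (c * a * r : ZMod (c * k)) = stdAddChar (a * r : ZMod k) := by
    simpa [mul_assoc] using stdAddChar_natCast_mul_left (c := c) (k := k) (a * r)
  rw [← sum_range_natCast_zmod]
  simpa [hinner] using sum_range_mul_stdAddChar_eq_mul (c := c) f (c * a)

lemma sum_range_mul_stdAddChar_eq_zero (f : ZMod k → ℂ) {a : ℤ} (ha : ¬(c : ℤ) ∣ a) :
    ∑ m ∈ range (c * k), f m * stdAddChar (a * m : ZMod (c * k)) = 0 := by
  have ha0 : (a : ZMod c) ≠ 0 := by rwa [Ne, intCast_zmod_eq_zero_iff_dvd]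
  rw [sum_range_mul_stdAddChar_eq_mul, AddChar.sum_mulShift _ (isPrimitive_stdAddChar c),
    if_neg ha0, Nat.cast_zero, zero_mul]

end GaussSum

section CharacterTransform

open ZMod

variable {c k : ℕ} [NeZero c] [NeZero k] {χ₁ χ₂ : DirichletCharacter ℂ k}

/-- The finite Fourier transform `l ↦ ∑_{m < ck} ∑_{n < k} χ₁(m) χ̄₂(n) e((bm + cn)l / ck)` of the
weights of the double sum that results from expanding `B̄_{p,χ₂}(bm/c)`. -/
noncomputable def charTransform (b c : ℕ) [NeZero c] (χ₁ χ₂ : DirichletCharacter ℂ k)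
    (l : ZMod (c * k)) : ℂ :=
  ∑ q ∈ range (c * k) ×ˢ range k, χ₁ q.1 * χ₂⁻¹ q.2 *
    stdAddChar ((b * q.1 + c * q.2 : ℤ) * l : ZMod (c * k))

lemma charTransform_intCast (b : ℕ) (l : ℤ) :
    charTransform b c χ₁ χ₂ l =
      (∑ m ∈ range (c * k), χ₁ m * stdAddChar ((b * l : ℤ) * m : ZMod (c * k))) *
        ∑ x, χ₂⁻¹ x * stdAddChar (l * x : ZMod k) := by
  rw [charTransform, ← sum_range_natCast_zmod, sum_mul_sum, sum_product]
  refine sum_congr rfl fun m _ => sum_congr rfl fun n _ => ?_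
  have hsplit : ((b * m + c * n : ℤ) * l : ZMod (c * k)) =
      (b * l : ℤ) * m + c * (l * n : ℤ) := by
    push_cast
    ring
  rw [hsplit, AddChar.map_add_eq_mul, stdAddChar_natCast_mul_left]
  push_cast
  ring

lemma charTransform_natCast_mul (hχ₁ : χ₁.IsPrimitive) (hχ₂ : χ₂.IsPrimitive) (b : ℕ) (l : ℤ) :
    charTransform b c χ₁ χ₂ (c * l) =
      c * GaussSumE b χ₁ * GaussSumE c χ₂⁻¹ * (χ₁⁻¹ * χ₂) l := by
  have hfirst : ∑ m ∈ range (c * k), χ₁ m * stdAddChar ((b * (c * l) : ℤ) * m : ZMod (c * k)) =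
      c * (χ₁⁻¹ l * GaussSumE b χ₁) := by
    have h := sum_range_mul_stdAddChar_mul (c := c) χ₁ (l * b)
    push_cast at h ⊢
    rw [← sum_mul_stdAddChar_eq_inv_mul_GaussSumE hχ₁, ← h]
    simp only [mul_left_comm (b : ZMod (c * k)), mul_comm (b : ZMod (c * k)), mul_assoc]
  have hsecond : ∑ x, χ₂⁻¹ x * stdAddChar ((c * l : ℤ) * x : ZMod k) =
      χ₂ l * GaussSumE c χ₂⁻¹ := by
    have h := sum_mul_stdAddChar_eq_inv_mul_GaussSumE (isPrimitive_inv hχ₂) c (l : ZMod k)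
    rw [inv_inv] at h
    rw [← h]
    push_cast
    simp only [mul_comm (c : ZMod k)]
  have h := charTransform_intCast (c := c) (χ₁ := χ₁) (χ₂ := χ₂) b (c * l)
  rw [hfirst, hsecond, Int.cast_mul, Int.cast_natCast] at h
  rw [h, MulChar.mul_apply]
  ring

lemma charTransform_eq_zero {b : ℕ} (hbc : b.Coprime c) {l : ℤ} (hl : ¬(c : ℤ) ∣ l) :
    charTransform b c χ₁ χ₂ l = 0 := by
  have hbl : ¬(c : ℤ) ∣ b * l := fun h =>
    hl ((Nat.isCoprime_iff_coprime.2 hbc.symm).dvd_of_dvd_mul_left h)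
  rw [charTransform_intCast, sum_range_mul_stdAddChar_eq_zero _ hbl, zero_mul]

lemma charTransform_neg {b : ℕ} (hbc : b.Coprime c) (hχ₁ : χ₁.IsPrimitive) (hχ₂ : χ₂.IsPrimitive)
    (l : ZMod (c * k)) :
    charTransform b c χ₁ χ₂ (-l) = χ₁ (-1) * χ₂ (-1) * charTransform b c χ₁ χ₂ l := by
  obtain ⟨l, rfl⟩ := intCast_surjective l
  by_cases hl : (c : ℤ) ∣ l
  · obtain ⟨l, rfl⟩ := hl
    have hχ : (χ₁⁻¹ * χ₂) (-(l : ZMod k)) = χ₁ (-1) * χ₂ (-1) * (χ₁⁻¹ * χ₂) l := by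
      rw [← neg_one_mul, map_mul, MulChar.mul_apply _ _ (-1), inv_apply_neg_one]
    have hneg := charTransform_natCast_mul hχ₁ hχ₂ (c := c) b (-l)
    push_cast at hneg ⊢
    rw [← mul_neg, hneg, hχ, charTransform_natCast_mul hχ₁ hχ₂]
    ring
  · rw [← Int.cast_neg, charTransform_eq_zero hbc (by rwa [dvd_neg]),
      charTransform_eq_zero hbc hl, mul_zero]

lemma LFunction_charTransform {b : ℕ} (hbc : b.Coprime c) (hχ₁ : χ₁.IsPrimitive)
    (hχ₂ : χ₂.IsPrimitive) (s : ℂ) :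
    ZMod.LFunction (charTransform b c χ₁ χ₂) s = (c : ℂ) ^ (-s) *
      (c * GaussSumE b χ₁ * GaussSumE c χ₂⁻¹ * DirichletCharacter.LFunction (χ₁⁻¹ * χ₂) s) := by
  rw [LFunction_of_support_dvd (Ψ := fun l => _ * (χ₁⁻¹ * χ₂) l)
    (charTransform_natCast_mul hχ₁ hχ₂ b) (fun _ => charTransform_eq_zero hbc),
    LFunction_const_mul, DirichletCharacter.LFunction]

end CharacterTransform

section DoubleSum

variable {k : ℕ}

lemma sum_Icc_one_sub_one {M : Type*} [AddCommMonoid M] {f : ℕ → M} (hf : f 0 = 0) (N : ℕ) :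
    ∑ n ∈ Icc 1 (N - 1), f n = ∑ n ∈ range N, f n := by
  refine sum_subset (fun n hn => ?_) fun n hn hn' => ?_
  · rw [mem_Icc] at hn
    exact mem_range.2 (by lia)
  · rw [mem_range] at hn
    rw [mem_Icc] at hn'
    obtain rfl : n = 0 := by lia
    exact hf

lemma BFunChar_eq_sum_range (hk : k ≠ 1) (χ : DirichletCharacter ℂ k) {p : ℕ} (hp : 1 ≤ p)
    (x : ℝ) :
    BFunChar χ p x = (k : ℂ) ^ (p - 1) * ∑ n ∈ range k, χ⁻¹ n * (BFun p ((n + x) / k) : ℂ) := by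
  have hconj (n : ℕ) : (starRingEnd ℂ) (χ n) = χ⁻¹ n := by
    rw [← conjChar_eq_inv]
    rfl
  rw [BFunChar, sum_Icc_one_sub_one (by simp [χ.map_zero' hk]), ← Nat.cast_pred hp, zpow_natCast]
  simp only [hconj]

lemma sum_char_mul_BFunChar_eq_sum_BFun [NeZero k] (hk : k ≠ 1) {c : ℕ} (hc : 0 < c)
    (χ₁ χ₂ : DirichletCharacter ℂ k) {p : ℕ} (hp : 1 ≤ p) (b : ℕ) :
    ∑ n ∈ Icc 1 (c * k - 1), χ₁ n * BFunChar χ₂ p (b * n / c) =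
      (k : ℂ) ^ (p - 1) * ∑ q ∈ range (c * k) ×ˢ range k, χ₁ q.1 * χ₂⁻¹ q.2 *
        (BFun p ((b * q.1 + c * q.2 : ℤ) / (c * k : ℕ)) : ℂ) := by
  rw [sum_Icc_one_sub_one (by simp [χ₁.map_zero' hk]), sum_product, mul_sum]
  refine sum_congr rfl fun m _ => ?_
  rw [BFunChar_eq_sum_range hk χ₂ hp, mul_left_comm, mul_sum]
  refine congrArg _ (sum_congr rfl fun n _ => ?_)
  have harg : ((n : ℝ) + b * m / c) / k = (b * m + c * n : ℤ) / (c * k : ℕ) := by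
    push_cast
    field_simp
    ring
  rw [harg, mul_assoc]

end DoubleSum

theorem sum_char_BFunChar_eq_LFunction_general (b c : ℕ) (hc : 0 < c) (hbc : Nat.Coprime b c)
    (k : ℕ) [NeZero k] (hk : k ≠ 1) (χ₁ χ₂ : DirichletCharacter ℂ k) (hprim₁ : χ₁.IsPrimitive)
    (hprim₂ : χ₂.IsPrimitive) (p : ℕ) (hp : 1 < p ∨ p = 1 ∧ χ₁ ≠ χ₂) :
    ∑ n ∈ Icc 1 (c * k - 1), χ₁ (n : ZMod k) * BFunChar χ₂ p (((b : ℝ) * n) / c) =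
      -(1 + (-1 : ℂ) ^ p * χ₁ (-1) * χ₂ (-1)) *
        ((p.factorial : ℂ) / (2 * Real.pi * Complex.I) ^ p) * ((k : ℂ) / c) ^ (p - 1) *
        GaussSumE b χ₁ * GaussSumE c (conjChar χ₂) *
        DirichletCharacter.LFunction (conjChar χ₁ * χ₂) p := by
  have hp1 : 1 ≤ p := hp.elim le_of_lt fun h => h.1.ge
  have : NeZero c := ⟨hc.ne'⟩
  have hc0 : (c : ℂ) ≠ 0 := Nat.cast_ne_zero.2 hc.ne'
  have hpow : (c : ℂ) ^ (-(p : ℂ)) * c = ((c : ℂ) ^ (p - 1))⁻¹ := by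
    obtain ⟨q, rfl⟩ := Nat.exists_eq_add_of_le' hp1
    rw [Complex.cpow_neg, Complex.cpow_natCast, Nat.add_sub_cancel, pow_succ]
    field_simp
  rw [sum_char_mul_BFunChar_eq_sum_BFun hk hc _ _ hp1, sum_mul_BFun_div_eq_LFunction hp1 _ _ _
    (S := charTransform b c χ₁ χ₂) fun _ => rfl]
  simp only [charTransform_neg hbc hprim₁ hprim₂, LFunction_const_mul,
    LFunction_charTransform hbc hprim₁ hprim₂, conjChar_eq_inv]
  rw [div_pow, div_eq_mul_inv _ ((c : ℂ) ^ (p - 1)), ← hpow]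
  ring

/-- Evaluation of `Σ_{n=1}^{ck−1} χ₁(n) B̄_{p,χ₂}(bn/c)` in terms of Gauss sums and the
Dirichlet L-function of `χ̄₁χ₂`. -/
theorem sum_char_BFunChar_eq_LFunction (b c : ℕ) (hb : 0 < b) (hc : 0 < c)
    (hbc : Nat.Coprime b c) (p : ℕ) (hp : 1 ≤ p)
    (k : ℕ) [NeZero k] (χ₁ χ₂ : DirichletCharacter ℂ k) (hne : χ₁ ≠ χ₂)
    (h₁ : χ₁ ≠ 1) (h₂ : χ₂ ≠ 1) (hprim₁ : χ₁.IsPrimitive) (hprim₂ : χ₂.IsPrimitive) :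
    ∑ n ∈ Finset.Icc 1 (c * k - 1), χ₁ (n : ZMod k) * BFunChar χ₂ p (((b : ℝ) * n) / c) =
      -(1 + (-1 : ℂ) ^ p * χ₁ (-1) * χ₂ (-1)) *
        ((p.factorial : ℂ) / (2 * Real.pi * Complex.I) ^ p) * ((k : ℂ) / c) ^ (p - 1) *
        GaussSumE b χ₁ * GaussSumE c (conjChar χ₂) *
        DirichletCharacter.LFunction (conjChar χ₁ * χ₂) p :=
  sum_char_BFunChar_eq_LFunction_general b c hc hbc k
    (by rintro rfl; exact h₁ χ₁.level_one) χ₁ χ₂ hprim₁ hprim₂ p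
    (hp.lt_or_eq.imp_right fun h => ⟨h.symm, hne⟩)
end
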